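/- Let Q ∈ ℂ^{2d×2d} be symmetric with Re Q positive semidefinite, and set F = J Q. Then for every t ≥ 0 and every X ∈ ℂ^{2d}, the number i·( σ( conj(exp(−2itF) X), exp(−2itF) X ) − σ( X̄, X ) ) is real and nonnegative, where X̄ and conj(·) denote entrywise complex conjugation; equivalently, the graph { (exp(−2itF) X, X) : X ∈ ℂ^{2d} } is a positive Lagrangian in ℂ^{2d} × ℂ^{2d} with respect to the form σ₁((X,Y),(X',Y')) = σ(X,X') − σ(Y,Y'). -/

import Mathlib

open Matrix Complex

namespace Stmt5

/-- The standard symplectic matrix `J = [[0, I],[−I, 0]]` on `ℂ^{2d} = ℂ^d ⊕ ℂ^d`. -/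
noncomputable def J (d : ℕ) : Matrix (Fin d ⊕ Fin d) (Fin d ⊕ Fin d) ℂ :=
  Matrix.fromBlocks 0 1 (-1) 0

/-- Bilinear (non-sesquilinear) pairing `⟨u,v⟩ = Σ_j u_j v_j` on `ℂ^{2d}`. -/
noncomputable def pairC {d : ℕ} (u v : Fin d ⊕ Fin d → ℂ) : ℂ := ∑ j, u j * v j

/-- Canonical symplectic form `σ(X,Y) = ⟨J X, Y⟩` on `ℂ^{2d}`. -/
noncomputable def sform {d : ℕ} (X Y : Fin d ⊕ Fin d → ℂ) : ℂ :=
  pairC ((J d).mulVec X) Y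

/-- Entrywise complex conjugation of a vector. -/
noncomputable def conjV {d : ℕ} (X : Fin d ⊕ Fin d → ℂ) : Fin d ⊕ Fin d → ℂ :=
  fun j => starRingEnd ℂ (X j)

section aux
attribute [local instance] Matrix.linftyOpNormedRing Matrix.linftyOpNormedAlgebra

theorem deriv_aux {n : Type*} [Fintype n] [DecidableEq n] (A K : Matrix n n ℂ) (s : ℝ) :
    HasDerivAt (fun s : ℝ => (NormedSpace.exp (s • A))ᴴ * K * NormedSpace.exp (s • A))
      ((NormedSpace.exp (s • A))ᴴ * (Aᴴ * K + K * A) * NormedSpace.exp (s • A)) s := by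
  have h1 : ∀ s : ℝ, (NormedSpace.exp (s • A))ᴴ = NormedSpace.exp (s • Aᴴ) := by
    intro s
    rw [← Matrix.exp_conjTranspose, Matrix.conjTranspose_smul]
    simp
  simp only [h1]
  have h2 := hasDerivAt_exp_smul_const (𝕂 := ℝ) Aᴴ s
  have h3 := hasDerivAt_exp_smul_const' (𝕂 := ℝ) A s
  have h4 := (h2.mul_const K).mul h3
  have e : NormedSpace.exp (s • Aᴴ) * (Aᴴ * K + K * A) * NormedSpace.exp (s • A) =
      NormedSpace.exp (s • Aᴴ) * Aᴴ * K * NormedSpace.exp (s • A) +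
      NormedSpace.exp (s • Aᴴ) * K * (A * NormedSpace.exp (s • A)) := by
    simp only [Matrix.mul_add, Matrix.add_mul, Matrix.mul_assoc]
  rw [e]
  exact h4

open scoped ComplexOrder in
theorem mono_aux {n : Type*} [Fintype n] [DecidableEq n] (A K : Matrix n n ℂ)
    (h : (Aᴴ * K + K * A).PosSemidef) (X : n → ℂ) (t : ℝ) (ht : 0 ≤ t) :
    (star X ⬝ᵥ K *ᵥ X).re ≤
      (star (NormedSpace.exp (t • A) *ᵥ X) ⬝ᵥ K *ᵥ (NormedSpace.exp (t • A) *ᵥ X)).re := by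
  let L : Matrix n n ℂ →ₗ[ℝ] ℝ :=
    { toFun := fun M => (star X ⬝ᵥ M *ᵥ X).re
      map_add' := by intro M N; simp [Matrix.add_mulVec, dotProduct_add]
      map_smul' := by intro c M; simp [Matrix.smul_mulVec, dotProduct_smul] }
  have key : ∀ (E K : Matrix n n ℂ), L (Eᴴ * K * E) = (star (E *ᵥ X) ⬝ᵥ K *ᵥ (E *ᵥ X)).re := by
    intro E K
    show (star X ⬝ᵥ (Eᴴ * K * E) *ᵥ X).re = _
    rw [Matrix.star_mulVec, ← Matrix.dotProduct_mulVec, Matrix.mulVec_mulVec, Matrix.mulVec_mulVec,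
      Matrix.mul_assoc]
  have hd : ∀ s : ℝ, HasDerivAt
      (fun s : ℝ => L ((NormedSpace.exp (s • A))ᴴ * K * NormedSpace.exp (s • A)))
      (L ((NormedSpace.exp (s • A))ᴴ * (Aᴴ * K + K * A) * NormedSpace.exp (s • A))) s := fun s =>
    (LinearMap.toContinuousLinearMap L).hasFDerivAt.comp_hasDerivAt s (deriv_aux A K s)
  have hm := monotone_of_hasDerivAt_nonneg hd (fun s => by
    rw [key]
    exact (Complex.le_def.1 (h.dotProduct_mulVec_nonneg _)).1)
  have := hm ht
  simp only [key] at this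
  simpa using this
end aux

theorem J_conj (d : ℕ) : (J d)ᴴ = - J d := by
  simp [J, Matrix.fromBlocks_conjTranspose, Matrix.fromBlocks_neg]

theorem J_sq (d : ℕ) : J d * J d = -1 := by
  simp [J, Matrix.fromBlocks_multiply, ← Matrix.fromBlocks_one, Matrix.fromBlocks_neg]

theorem sform_eq {d : ℕ} (Y : Fin d ⊕ Fin d → ℂ) :
    Complex.I * sform (conjV Y) Y = star Y ⬝ᵥ ((-Complex.I) • J d) *ᵥ Y := by
  have h : sform (conjV Y) Y = (J d *ᵥ star Y) ⬝ᵥ Y := rfl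
  have hT : (J d)ᵀ = - J d := by
    simp [J, Matrix.fromBlocks_transpose, Matrix.fromBlocks_neg]
  have h2 : J d *ᵥ star Y = star Y ᵥ* (-J d) := by
    rw [← hT, Matrix.vecMul_transpose]
  rw [h, h2, ← Matrix.dotProduct_mulVec]
  simp [Matrix.smul_mulVec, Matrix.neg_mulVec]

open scoped ComplexOrder in
theorem posSemidef_aux {d : ℕ} (Q : Matrix (Fin d ⊕ Fin d) (Fin d ⊕ Fin d) ℂ)
    (hQ : Q.IsSymm) (hReQ : (Q.map Complex.re).PosSemidef) : (Q + Qᴴ).PosSemidef := by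
  obtain ⟨B, hB⟩ := by
    open scoped MatrixOrder in
    exact CStarAlgebra.nonneg_iff_eq_star_mul_self.1 hReQ.nonneg
  have e : Q + Qᴴ = (2:ℝ) • ((B.map Complex.ofReal)ᴴ * (B.map Complex.ofReal)) := by
    ext i j
    have h1 := congrFun (congrFun hB i) j
    have h2 : Q j i = Q i j := hQ.apply i j
    simp only [Matrix.map_apply, Matrix.star_eq_conjTranspose, Matrix.mul_apply,
      Matrix.conjTranspose_apply, star_trivial] at h1
    simp only [Matrix.add_apply, Matrix.conjTranspose_apply, h2, Matrix.smul_apply,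
      Matrix.mul_apply, Matrix.map_apply]
    have h3 : Q i j + star (Q i j) = ((2 * (Q i j).re : ℝ) : ℂ) := by
      simpa using Complex.add_conj (Q i j)
    rw [h3, h1]
    simp [mul_add]
  rw [e]
  exact (Matrix.posSemidef_conjTranspose_mul_self _).smul (by norm_num)

/-- Lemma: positivity of the graph of `exp(−2itF)`.  Let `Q ∈ ℂ^{2d×2d}`
be symmetric with `Re Q` positive semidefinite and `F = J Q`.  Then for every `t ≥ 0` and
every `X ∈ ℂ^{2d}`, the number
`i·(σ(conj(exp(−2itF)X), exp(−2itF)X) − σ(X̄,X))` is a nonnegative real number;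
i.e. the graph of `exp(−2itF)` is a positive Lagrangian with respect to `σ₁`. -/
theorem stmt_5 (d : ℕ) (Q : Matrix (Fin d ⊕ Fin d) (Fin d ⊕ Fin d) ℂ)
    (hQ : Q.IsSymm) (hReQ : (Q.map Complex.re).PosSemidef) :
    ∀ t : ℝ, 0 ≤ t → ∀ X : Fin d ⊕ Fin d → ℂ,
      ∃ r : ℝ, 0 ≤ r ∧
        Complex.I *
          (sform (conjV ((NormedSpace.exp ((-(2 * Complex.I * t)) • (J d * Q))).mulVec X))
                 ((NormedSpace.exp ((-(2 * Complex.I * t)) • (J d * Q))).mulVec X)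
            - sform (conjV X) X) = r := by
  intro t ht X
  set A : Matrix (Fin d ⊕ Fin d) (Fin d ⊕ Fin d) ℂ := (-(2 * Complex.I)) • (J d * Q) with hA
  have hAt : (-(2 * Complex.I * t)) • (J d * Q) = t • A := by
    rw [hA, ← Complex.coe_smul, smul_smul]
    congr 1; ring
  rw [hAt]
  set K := (-Complex.I) • J d with hK
  have hKh : Kᴴ = K := by
    rw [hK, Matrix.conjTranspose_smul, J_conj]; simp
  have hreal : ∀ Y : Fin d ⊕ Fin d → ℂ, Complex.I * sform (conjV Y) Y =
      ((star Y ⬝ᵥ K *ᵥ Y).re : ℂ) := by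
    intro Y
    rw [sform_eq]
    refine (Complex.conj_eq_iff_re.1 ?_).symm
    show star (star Y ⬝ᵥ K *ᵥ Y) = _
    rw [← Matrix.star_dotProduct_star, star_star, Matrix.star_mulVec, hKh]
    first
    | rw [← Matrix.dotProduct_mulVec]
    | rw [dotProduct_comm, ← Matrix.dotProduct_mulVec]
  open scoped ComplexOrder in
  have hpos : (Aᴴ * K + K * A).PosSemidef := by
    have e : Aᴴ * K + K * A = (2:ℝ) • (Q + Qᴴ) := by
      have e1 : Aᴴ * K = (2:ℂ) • Qᴴ := by
        rw [hA, hK, Matrix.conjTranspose_smul, Matrix.conjTranspose_mul, J_conj,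
          Matrix.smul_mul, Matrix.mul_smul, smul_smul, Matrix.mul_assoc, Matrix.neg_mul, J_sq]
        simp [mul_assoc]
      have e2 : K * A = (2:ℂ) • Q := by
        rw [hA, hK, Matrix.smul_mul, Matrix.mul_smul, smul_smul, ← Matrix.mul_assoc, J_sq]
        have : -Complex.I * -(2 * Complex.I) = -2 := by linear_combination 2 * Complex.I_mul_I
        rw [this]; simp
      rw [e1, e2, ← smul_add, add_comm, ← Complex.coe_smul]
      simp
    rw [e]
    exact (posSemidef_aux Q hQ hReQ).smul (by norm_num)
  have hm := mono_aux A K hpos X t ht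
  refine ⟨_, sub_nonneg.2 hm, ?_⟩
  rw [mul_sub, hreal, hreal]
  push_cast
  rfl

end Stmt5
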